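/- Fix 0 < p < 1, ε ∈ (0,1), c > 0, and d ∈ ℕ with εd an integer. Let 𝒞 ⊆ B(d, εd) be a code such that any two distinct codewords have at most cd ones in common, let T ⊆ 𝒞 and y ∈ 𝒞 \ T, set S = supp(y), and let A be the multiset consisting of one copy of each word in star_2(T). Then F_p(A,S) ≤ r^{1−p} · N^p, where r = Σ_{i=0}^{⌊cd⌋} C(d,i) and N = |T| · 2^{εd}. -/

import Mathlib

open scoped Classical

/-- The support of a binary word: the set of coordinates where it equals 1. -/
def supp2 {d : ℕ} (w : Fin d → Fin 2) : Finset (Fin d) :=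
  Finset.univ.filter (fun i => w i ≠ 0)

/-- `star_2(T)`: all binary words whose support is contained in the support of some
word in `T`. -/
def star2 {d : ℕ} (T : Finset (Fin d → Fin 2)) : Finset (Fin d → Fin 2) :=
  Finset.univ.filter (fun w => ∃ y ∈ T, supp2 w ⊆ supp2 y)

/-- The frequency of the pattern `z ∈ {0,1}^S` among the rows of the multiset `A`:
the number of rows `w` of `A` with `w|_S = z`. -/
noncomputable def freq {d : ℕ} (A : Multiset (Fin d → Fin 2)) (S : Finset (Fin d))
    (z : S → Fin 2) : ℕ :=
  (A.filter (fun w => ∀ i : S, w i = z i)).card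

/-- The projected frequency moment `F_p(A,S) = Σ_z f_z(A,S)^p`. -/
noncomputable def Fp {d : ℕ} (A : Multiset (Fin d → Fin 2)) (S : Finset (Fin d))
    (p : ℝ) : ℝ :=
  ∑ z : S → Fin 2, (freq A S z : ℝ) ^ p

/-!
A pattern on `S` seen in `star2 T` is the restriction of a word supported inside some `t ∈ T`, so
its ones lie in `supp2 t ∩ S`: when these intersections have at most `n` elements, the observed
patterns lie in a Hamming ball of radius `n` in `{0,1}^S`. Independently of this, `star2 T` has at
most `|T| * 2 ^ k` rows, and for `p ≤ 1` Hölder's inequality bounds the sum of the `p`-th powers of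
the frequencies by its value when the rows are spread evenly over the observed patterns.
-/

section

open Finset

theorem sum_rpow_le_card_rpow_mul_rpow_sum {ι : Type*} (s : Finset ι) {f : ι → ℝ}
    (hf : ∀ i ∈ s, 0 ≤ f i) {p : ℝ} (hp0 : 0 < p) (hp1 : p ≤ 1) :
    ∑ i ∈ s, f i ^ p ≤ (#s : ℝ) ^ (1 - p) * (∑ i ∈ s, f i) ^ p := by
  have holder := Real.inner_le_weight_mul_Lp_of_nonneg s.attach (one_le_inv_iff₀.2 ⟨hp0, hp1⟩)
    (fun _ ↦ 1) (fun i ↦ f i ^ p) (fun _ ↦ zero_le_one) fun i ↦ Real.rpow_nonneg (hf i i.2) p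
  rw [← sum_attach s (f · ^ p), ← sum_attach s f]
  simpa [Real.rpow_rpow_inv (hf _ (Subtype.prop _)) hp0.ne'] using holder

section HammingBall

variable {ι : Type*} [Fintype ι] [DecidableEq ι]

/-- The correspondence between binary words indexed by `ι` and subsets of `ι`, sending a word to
its support; on `Fin d` the forward map is `supp2`. -/
def binaryWordEquivFinset : (ι → Fin 2) ≃ Finset ι where
  toFun z := {i | z i ≠ 0}
  invFun s i := if i ∈ s then 1 else 0
  left_inv z := by
    ext i
    by_cases hi : z i = 0
    · simp [hi]
    · simp [hi, Fin.eq_one_of_ne_zero]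
  right_inv s := by ext i; simp

theorem card_binaryWordEquivFinset (z : ι → Fin 2) :
    #(binaryWordEquivFinset z) = hammingNorm z := by
  simp [binaryWordEquivFinset, hammingNorm]

theorem card_filter_hammingNorm_eq (n : ℕ) :
    #{z : ι → Fin 2 | hammingNorm z = n} = (Fintype.card ι).choose n := by
  rw [← card_univ, ← card_powersetCard]
  exact card_equiv binaryWordEquivFinset fun z ↦ by
    simp [mem_powersetCard, card_binaryWordEquivFinset]

theorem card_filter_hammingNorm_le (n : ℕ) :
    #{z : ι → Fin 2 | hammingNorm z ≤ n} = ∑ i ∈ range (n + 1), (Fintype.card ι).choose i := by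
  have hmaps : ∀ z ∈ ({z | hammingNorm z ≤ n} : Finset (ι → Fin 2)),
      hammingNorm z ∈ range (n + 1) := by simp
  rw [card_eq_sum_card_fiberwise hmaps]
  refine sum_congr rfl fun i hi ↦ ?_
  rw [← card_filter_hammingNorm_eq, filter_filter]
  congr 1 with z
  grind

end HammingBall

variable {d : ℕ}

section Frequencies

variable (A : Multiset (Fin d → Fin 2)) (S : Finset (Fin d))

/-- The distinct patterns that the rows of `A` show on the coordinates `S`. -/
noncomputable def observedPatterns : Finset (S → Fin 2) :=
  (A.map S.restrict).toFinset

theorem freq_eq_count (z : S → Fin 2) : freq A S z = (A.map S.restrict).count z := by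
  rw [freq, Multiset.count_map]
  congr! 3 with w
  simp [funext_iff, eq_comm]

theorem sum_freq_observedPatterns : ∑ z ∈ observedPatterns A S, freq A S z = A.card := by
  simp_rw [freq_eq_count, observedPatterns, Multiset.toFinset_sum_count_eq, Multiset.card_map]

theorem Fp_eq_sum_observedPatterns {p : ℝ} (hp : p ≠ 0) :
    Fp A S p = ∑ z ∈ observedPatterns A S, (freq A S z : ℝ) ^ p := by
  refine (sum_subset (subset_univ _) fun z _ hz ↦ ?_).symm
  have hfreq : freq A S z = 0 := by
    rwa [freq_eq_count, Multiset.count_eq_zero, ← Multiset.mem_toFinset]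
  rw [hfreq, Nat.cast_zero, Real.zero_rpow hp]

theorem Fp_le_card_observedPatterns_rpow_mul_card_rpow {p : ℝ} (hp0 : 0 < p) (hp1 : p ≤ 1) :
    Fp A S p ≤ (#(observedPatterns A S) : ℝ) ^ (1 - p) * (A.card : ℝ) ^ p := by
  rw [Fp_eq_sum_observedPatterns A S hp0.ne', ← sum_freq_observedPatterns A S, Nat.cast_sum]
  exact sum_rpow_le_card_rpow_mul_rpow_sum _ (fun _ _ ↦ Nat.cast_nonneg _) hp0 hp1

end Frequencies

theorem supp2_injective : Function.Injective (supp2 (d := d)) :=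
  binaryWordEquivFinset.injective

theorem mem_star2 {T : Finset (Fin d → Fin 2)} {w : Fin d → Fin 2} :
    w ∈ star2 T ↔ ∃ t ∈ T, supp2 w ⊆ supp2 t := by
  simp [star2]

theorem card_star2_le {k : ℕ} {T : Finset (Fin d → Fin 2)} (hT : ∀ t ∈ T, #(supp2 t) ≤ k) :
    #(star2 T) ≤ #T * 2 ^ k := calc
  #(star2 T) ≤ #(T.biUnion fun t ↦ (supp2 t).powerset) :=
    card_le_card_of_injOn supp2 (fun w hw ↦ by simpa [mem_star2] using hw) supp2_injective.injOn
  _ ≤ #T * 2 ^ k := card_biUnion_le_card_mul _ _ _ fun t ht ↦ by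
    rw [card_powerset]
    exact Nat.pow_le_pow_right two_pos (hT t ht)

theorem hammingNorm_restrict (S : Finset (Fin d)) (w : Fin d → Fin 2) :
    hammingNorm (S.restrict w) = #(supp2 w ∩ S) := by
  rw [← filter_mem_eq_inter, ← card_subtype, hammingNorm]
  congr 1
  ext i
  rw [mem_filter_univ, mem_subtype, supp2, mem_filter_univ, restrict]

theorem hammingNorm_le_of_mem_observedPatterns_star2 {n : ℕ} {T : Finset (Fin d → Fin 2)}
    {S : Finset (Fin d)} (hTS : ∀ t ∈ T, #(supp2 t ∩ S) ≤ n) {z : S → Fin 2}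
    (hz : z ∈ observedPatterns (star2 T).val S) : hammingNorm z ≤ n := by
  obtain ⟨w, hw, rfl⟩ := Multiset.mem_map.1 (Multiset.mem_toFinset.1 hz)
  obtain ⟨t, ht, hwt⟩ := mem_star2.1 hw
  rw [hammingNorm_restrict]
  exact (card_le_card (inter_subset_inter_right hwt)).trans (hTS t ht)

theorem card_observedPatterns_star2_le {n : ℕ} {T : Finset (Fin d → Fin 2)} {S : Finset (Fin d)}
    (hTS : ∀ t ∈ T, #(supp2 t ∩ S) ≤ n) :
    #(observedPatterns (star2 T).val S) ≤ ∑ i ∈ range (n + 1), (#S).choose i := by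
  rw [← Fintype.card_coe S, ← card_filter_hammingNorm_le]
  exact card_le_card fun z hz ↦
    mem_filter.2 ⟨mem_univ z, hammingNorm_le_of_mem_observedPatterns_star2 hTS hz⟩

theorem stmt_12_general {k n : ℕ} {p : ℝ} (hp0 : 0 < p) (hp1 : p ≤ 1)
    {T : Finset (Fin d → Fin 2)} {S : Finset (Fin d)} (hT : ∀ t ∈ T, #(supp2 t) ≤ k)
    (hTS : ∀ t ∈ T, #(supp2 t ∩ S) ≤ n) :
    Fp (star2 T).val S p ≤
      ((∑ i ∈ range (n + 1), (#S).choose i : ℕ) : ℝ) ^ (1 - p) * ((#T * 2 ^ k : ℕ) : ℝ) ^ p := by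
  have := sub_nonneg.2 hp1
  refine (Fp_le_card_observedPatterns_rpow_mul_card_rpow _ S hp0 hp1).trans ?_
  gcongr
  · exact card_observedPatterns_star2_le hTS
  · exact card_star2_le hT

end

/-- Fix `0 < p < 1`, `ε ∈ (0,1)`, `c > 0`, and `d ∈ ℕ` with `k = εd` an
integer.  Let `𝒞 ⊆ B(d, εd)` be a code such that any two distinct codewords have at most
`cd` ones in common, let `T ⊆ 𝒞` and `y ∈ 𝒞 \ T`, set `S = supp(y)`, and let `A` be the
multiset consisting of one copy of each word in `star_2(T)`.  Then
`F_p(A,S) ≤ r^{1−p} · N^p`, where `r = Σ_{i=0}^{⌊cd⌋} C(d,i)` and `N = |T| · 2^{εd}`. -/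
theorem stmt_12 (d k : ℕ) (p ε c : ℝ) (hp0 : 0 < p) (hp1 : p < 1)
    (hε : ε ∈ Set.Ioo (0 : ℝ) 1) (hc : 0 < c) (hk : (k : ℝ) = ε * d)
    (𝒞 : Finset (Fin d → Fin 2)) (hw : ∀ z ∈ 𝒞, (supp2 z).card = k)
    (hcode : ∀ x ∈ 𝒞, ∀ x' ∈ 𝒞, x ≠ x' →
      ((supp2 x ∩ supp2 x').card : ℝ) ≤ c * d)
    (T : Finset (Fin d → Fin 2)) (hT : T ⊆ 𝒞)
    (y : Fin d → Fin 2) (hy𝒞 : y ∈ 𝒞) (hyT : y ∉ T) :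
    Fp (star2 T).val (supp2 y) p
      ≤ ((∑ i ∈ Finset.range (⌊c * d⌋₊ + 1), d.choose i : ℕ) : ℝ) ^ (1 - p) *
          ((T.card * 2 ^ k : ℕ) : ℝ) ^ p := by
  have hinter : ∀ t ∈ T, (supp2 t ∩ supp2 y).card ≤ ⌊c * d⌋₊ := fun t ht ↦
    Nat.le_floor (hcode t (hT ht) y hy𝒞 (ne_of_mem_of_not_mem ht hyT))
  refine (stmt_12_general hp0 hp1.le (fun t ht ↦ (hw t (hT ht)).le) hinter).trans ?_
  have := sub_nonneg.2 hp1.le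
  gcongr
  exact card_finset_fin_le _
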